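/- (Morrey-type Hölder estimate via Choquet integrals) Let $n\ge2$, $\delta\in(0,n]$, and $p\in(\delta,\infty)$. There is a constant $c=c(\delta,n,p)$ such that for every $u\in C^1(\mathbb{R}^n)$ and all $x\ne y$ in $\mathbb{R}^n$, $\frac{|u(x)-u(y)|}{|x-y|^{1-\delta/p}} \le c\Big(\int_{\mathbb{R}^n}|\nabla u(z)|^{p}\,d\mathcal{H}^{\delta}_\infty\Big)^{1/p}$. -/

import Mathlib

open MeasureTheory Metric Set ENNReal

/-- δ-dimensional Hausdorff content via countable ball coverings. -/
noncomputable def hc (n : ℕ) (δ : ℝ) (E : Set (EuclideanSpace ℝ (Fin n))) : ℝ≥0∞ :=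
  ⨅ (c : ℕ → EuclideanSpace ℝ (Fin n)) (r : ℕ → ℝ) (_ : ∀ i, 0 < r i)
    (_ : E ⊆ ⋃ i, ball (c i) (r i)), ∑' i, ENNReal.ofReal (r i ^ δ)

/-- Choquet integral of a nonnegative function over Ω with respect to `hc n δ`. -/
noncomputable def choquet (n : ℕ) (δ : ℝ) (Ω : Set (EuclideanSpace ℝ (Fin n)))
    (f : EuclideanSpace ℝ (Fin n) → ℝ≥0∞) : ℝ≥0∞ :=
  ∫⁻ t in Ioi (0:ℝ), hc n δ {x | x ∈ Ω ∧ ENNReal.ofReal t < f x}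

theorem hc_mono {n : ℕ} {δ : ℝ} {E F : Set (EuclideanSpace ℝ (Fin n))} (h : E ⊆ F) :
    hc n δ E ≤ hc n δ F := by
  unfold hc
  exact iInf_mono fun c => iInf_mono fun r => iInf_mono fun _ =>
    le_iInf fun hF => iInf_le_of_le (h.trans hF) le_rfl

/-- Chebyshev's inequality for the Choquet integral. -/
theorem ofReal_mul_hc_le_choquet {n : ℕ} {δ : ℝ} (f : EuclideanSpace ℝ (Fin n) → ℝ≥0∞) (t : ℝ) :
    ENNReal.ofReal t * hc n δ {x | ENNReal.ofReal t < f x} ≤ choquet n δ univ f := by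
  calc ENNReal.ofReal t * hc n δ {x | ENNReal.ofReal t < f x}
      = ∫⁻ _ in Ioc (0:ℝ) t, hc n δ {x | ENNReal.ofReal t < f x} := by
        rw [setLIntegral_const, Real.volume_Ioc, sub_zero, mul_comm]
    _ ≤ ∫⁻ s in Ioc (0:ℝ) t, hc n δ {x | x ∈ univ ∧ ENNReal.ofReal s < f x} := by
        refine setLIntegral_mono' measurableSet_Ioc fun s hs => hc_mono fun x hx => ?_
        exact ⟨mem_univ x, (ENNReal.ofReal_le_ofReal hs.2).trans_lt hx⟩
    _ ≤ choquet n δ univ f := lintegral_mono_set Ioc_subset_Ioi_self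

theorem ENNReal.tsum_rpow_le_rpow_tsum {ι : Type*} (a : ι → ℝ≥0∞) {θ : ℝ} (hθ : 1 ≤ θ) :
    ∑' i, a i ^ θ ≤ (∑' i, a i) ^ θ := by
  have split (b : ℝ≥0∞) : b ^ θ = b * b ^ (θ - 1) := by
    conv_lhs => rw [show θ = 1 + (θ - 1) by ring,
      ENNReal.rpow_add_of_nonneg _ _ zero_le_one (by linarith), ENNReal.rpow_one]
  rw [split, ← ENNReal.tsum_mul_right]
  refine ENNReal.tsum_le_tsum fun i => ?_
  rw [split]
  gcongr
  exact ENNReal.le_tsum i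

theorem volume_le_hc_rpow {n : ℕ} (hn : 0 < n) {δ : ℝ} (hδ : 0 < δ) (hδn : δ ≤ n)
    (E : Set (EuclideanSpace ℝ (Fin n))) :
    volume E ≤ volume (ball (0 : EuclideanSpace ℝ (Fin n)) 1) * hc n δ E ^ (n / δ) := by
  set ω := volume (ball (0 : EuclideanSpace ℝ (Fin n)) 1) with hω
  have hω0 : ω ≠ 0 := (measure_ball_pos _ _ one_pos).ne'
  have hωt : ω ≠ ⊤ := measure_ball_lt_top.ne
  have hn' : (0:ℝ) < n := by exact_mod_cast hn
  have hθ : 0 < (n:ℝ) / δ := by positivity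
  rw [mul_comm, ← ENNReal.div_le_iff hω0 hωt, ← ENNReal.rpow_inv_le_iff hθ]
  unfold hc
  refine le_iInf fun c => le_iInf fun r => le_iInf fun hr => le_iInf fun hE => ?_
  rw [ENNReal.rpow_inv_le_iff hθ, ENNReal.div_le_iff hω0 hωt]
  calc volume E ≤ ∑' i, volume (ball (c i) (r i)) :=
        (measure_mono hE).trans (measure_iUnion_le _)
    _ = (∑' i, ENNReal.ofReal (r i ^ δ) ^ ((n:ℝ) / δ)) * ω := by
        rw [← ENNReal.tsum_mul_right]
        refine tsum_congr fun i => ?_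
        rw [Measure.addHaar_ball_of_pos _ _ (hr i), finrank_euclideanSpace_fin,
          ENNReal.ofReal_rpow_of_nonneg (Real.rpow_nonneg (hr i).le _) hθ.le,
          ← Real.rpow_mul (hr i).le, mul_div_cancel₀ _ hδ.ne', Real.rpow_natCast]
    _ ≤ _ := by
        gcongr
        exact ENNReal.tsum_rpow_le_rpow_tsum _ ((one_le_div hδ).2 hδn)

/-- A function with a weak-type decay of exponent `q > 1` at height `s₀` relative to `μ B`
is integrable over `B` with the corresponding bound. -/
theorem setLIntegral_le_of_weak_bound {α : Type*} [MeasurableSpace α] (μ : Measure α) {B : Set α}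
    {h : α → ℝ} (hh : Measurable h) (h0 : ∀ z, 0 ≤ h z) {q s₀ : ℝ} (hq : 1 < q) (hs₀ : 0 < s₀)
    (hw : ∀ s, 0 < s → μ {z | s < h z} ≤ μ B * ENNReal.ofReal ((s₀ / s) ^ q)) :
    ∫⁻ z in B, ENNReal.ofReal (h z) ∂μ ≤ μ B * ENNReal.ofReal (s₀ * (q / (q - 1))) := by
  have hq0 : 0 < q - 1 := by linarith
  rw [lintegral_eq_lintegral_meas_lt _ (.of_forall h0) hh.aemeasurable,
    ← Ioc_union_Ioi_eq_Ioi hs₀.le]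
  have tail : ∫⁻ s in Ioi s₀, ENNReal.ofReal ((s₀ / s) ^ q) = ENNReal.ofReal (s₀ / (q - 1)) := by
    have e : EqOn (fun s => (s₀ / s) ^ q) (fun s => s₀ ^ q * s ^ (-q)) (Ioi s₀) := fun s hs => by
      have : 0 < s := hs₀.trans hs
      simp only
      rw [Real.div_rpow hs₀.le this.le, Real.rpow_neg this.le, div_eq_mul_inv]
    have hi : IntegrableOn (fun s => (s₀ / s) ^ q) (Ioi s₀) :=
      IntegrableOn.congr_fun ((integrableOn_Ioi_rpow_of_lt (by linarith) hs₀).const_mul (s₀ ^ q))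
        e.symm measurableSet_Ioi
    rw [← ofReal_integral_eq_lintegral_ofReal hi]
    · congr 1
      rw [setIntegral_congr_fun measurableSet_Ioi e, integral_const_mul,
        integral_Ioi_rpow_of_lt (by linarith) hs₀]
      have : s₀ ^ q * s₀ ^ (-q + 1) = s₀ := by
        rw [← Real.rpow_add hs₀]; simp
      rw [show -q + 1 = -(q - 1) by ring] at this ⊢
      rw [neg_div_neg_eq, mul_div_assoc', this]
    · filter_upwards [ae_restrict_mem measurableSet_Ioi] with s hs
      have : 0 < s := hs₀.trans hs
      positivity
  calc _ ≤ (∫⁻ s in Ioc 0 s₀, (μ.restrict B) {z | s < h z})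
          + ∫⁻ s in Ioi s₀, (μ.restrict B) {z | s < h z} := lintegral_union_le _ _ _
    _ ≤ (∫⁻ s in Ioc 0 s₀, μ B) + ∫⁻ s in Ioi s₀, μ B * ENNReal.ofReal ((s₀ / s) ^ q) := by
        refine add_le_add (lintegral_mono fun s => ?_)
          (setLIntegral_mono' measurableSet_Ioi fun s hs => ?_)
        · exact (measure_mono (subset_univ _)).trans (by simp)
        · exact (Measure.restrict_apply_le _ _).trans (hw s (hs₀.trans hs))
    _ = μ B * ENNReal.ofReal (s₀ * (q / (q - 1))) := by
        rw [lintegral_const_mul _ (by fun_prop), tail, setLIntegral_const, Real.volume_Ioc,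
          sub_zero, ← mul_add, ← ENNReal.ofReal_add hs₀.le (by positivity)]
        congr 2
        field_simp
        ring

theorem ofReal_abs_sub_le_lintegral_segment {E : Type*} [NormedAddCommGroup E] [NormedSpace ℝ E]
    {u : E → ℝ} (hu : ContDiff ℝ 1 u) {a z : E} {R : ℝ} (hR : dist z a ≤ R) :
    ENNReal.ofReal |u z - u a| ≤
      ENNReal.ofReal R * ∫⁻ t in Ioc (0:ℝ) 1, ENNReal.ofReal ‖fderiv ℝ u (a + t • (z - a))‖ := by
  have hcf : Continuous (fderiv ℝ u) := hu.continuous_fderiv one_ne_zero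
  have hd : ∀ t : ℝ, HasDerivAt (fun t : ℝ => u (a + t • (z - a)))
      (fderiv ℝ u (a + t • (z - a)) (z - a)) t := fun t => by
    have h1 : HasDerivAt (fun t : ℝ => a + t • (z - a)) (z - a) t := by
      simpa using ((hasDerivAt_id t).smul_const (z - a)).const_add a
    exact ((hu.differentiable one_ne_zero) _).hasFDerivAt.comp_hasDerivAt t h1
  have hc : Continuous fun t : ℝ => fderiv ℝ u (a + t • (z - a)) (z - a) := by fun_prop
  have ftc := intervalIntegral.integral_eq_sub_of_hasDerivAt (a := 0) (b := 1)
    (fun t _ => hd t) (hc.intervalIntegrable _ _)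
  simp only [one_smul, zero_smul, add_zero, add_sub_cancel] at ftc
  rw [← ftc, intervalIntegral.integral_of_le zero_le_one, ← Real.norm_eq_abs,
    ← lintegral_const_mul' _ _ ENNReal.ofReal_ne_top, ofReal_norm]
  refine (enorm_integral_le_lintegral_enorm _).trans (lintegral_mono fun t => ?_)
  rw [← ofReal_norm, ← ENNReal.ofReal_mul (dist_nonneg.trans hR), mul_comm]
  refine ENNReal.ofReal_le_ofReal ((ContinuousLinearMap.le_opNorm _ _).trans ?_)
  rw [← dist_eq_norm]
  gcongr

theorem volume_preimage_homothety {n : ℕ} (a : EuclideanSpace ℝ (Fin n)) {t : ℝ} (ht : 0 < t)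
    (S : Set (EuclideanSpace ℝ (Fin n))) :
    volume {z | a + t • (z - a) ∈ S} = ENNReal.ofReal ((t ^ n)⁻¹) * volume S := by
  have : {z | a + t • (z - a) ∈ S} =
      (fun z => z - a) ⁻¹' ((t • ·) ⁻¹' ((a + ·) ⁻¹' S)) := rfl
  rw [this]
  simp only [sub_eq_add_neg]
  rw [measure_preimage_add_right, Measure.addHaar_preimage_smul _ ht.ne', measure_preimage_add,
    finrank_euclideanSpace_fin, abs_of_pos (by positivity)]

/-- Morrey's estimate for the mean deviation of `u` from `u a` over a set `B`, under a weak-type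
bound of exponent `q > n` on the gradient. -/
theorem setLIntegral_abs_sub_le_of_weak_bound {n : ℕ} (hn : 1 ≤ n)
    {u : EuclideanSpace ℝ (Fin n) → ℝ} (hu : ContDiff ℝ 1 u) {q S R : ℝ} (hq : n < q) (hS : 0 < S)
    {B : Set (EuclideanSpace ℝ (Fin n))} (hB : MeasurableSet B)
    (a : EuclideanSpace ℝ (Fin n)) (hR : ∀ z ∈ B, dist z a ≤ R)
    (hw : ∀ s, 0 < s → volume {z | s < ‖fderiv ℝ u z‖} ≤
      volume B * ENNReal.ofReal ((S / s) ^ q)) :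
    ∫⁻ z in B, ENNReal.ofReal |u z - u a| ≤
      volume B * (ENNReal.ofReal R * ENNReal.ofReal (S * (q / (q - 1) * (1 - n / q)⁻¹))) := by
  have hn' : (1:ℝ) ≤ n := by exact_mod_cast hn
  have hq0 : 0 < q := by linarith
  have hq1 : 0 < q - 1 := by linarith
  have hnq : (n:ℝ) / q < 1 := (div_lt_one hq0).2 hq
  have hcf : Continuous (fderiv ℝ u) := hu.continuous_fderiv one_ne_zero
  have slice : ∀ t ∈ Ioc (0:ℝ) 1,
      ∫⁻ z in B, ENNReal.ofReal ‖fderiv ℝ u (a + t • (z - a))‖ ≤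
        volume B * (ENNReal.ofReal (S * (q / (q - 1))) * ENNReal.ofReal (t ^ (-(n / q)))) := by
    intro t ht
    have ht0 : 0 < t := ht.1
    rw [← ENNReal.ofReal_mul (by positivity),
      show S * (q / (q - 1)) * t ^ (-(n / q)) = (t ^ (-(n / q)) * S) * (q / (q - 1)) by ring]
    refine setLIntegral_le_of_weak_bound volume (by fun_prop) (fun z => norm_nonneg _)
      (by linarith) (by positivity) fun s hs => ?_
    rw [show {z | s < ‖fderiv ℝ u (a + t • (z - a))‖} =
      {z | a + t • (z - a) ∈ {w | s < ‖fderiv ℝ u w‖}} from rfl, volume_preimage_homothety a ht0]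
    calc _ ≤ ENNReal.ofReal ((t ^ n)⁻¹) * (volume B * ENNReal.ofReal ((S / s) ^ q)) := by
          gcongr; exact hw s hs
      _ = _ := by
          rw [mul_left_comm, ← ENNReal.ofReal_mul (by positivity), mul_div_assoc,
            Real.mul_rpow (by positivity) (by positivity), ← Real.rpow_mul ht0.le,
            neg_mul, div_mul_cancel₀ _ hq0.ne', Real.rpow_neg ht0.le, Real.rpow_natCast]
  have radial : ∫⁻ t in Ioc (0:ℝ) 1, ENNReal.ofReal (t ^ (-((n:ℝ) / q))) =
      ENNReal.ofReal ((1 - n / q)⁻¹) := by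
    have hi := (intervalIntegral.intervalIntegrable_rpow' (a := 0) (b := 1)
      (by linarith : -1 < -((n:ℝ) / q)))
    rw [← ofReal_integral_eq_lintegral_ofReal
      ((intervalIntegrable_iff_integrableOn_Ioc_of_le zero_le_one).1 hi),
      ← intervalIntegral.integral_of_le zero_le_one, integral_rpow (Or.inl (by linarith)),
      Real.one_rpow, Real.zero_rpow (by linarith), sub_zero, one_div, neg_add_eq_sub]
    filter_upwards [ae_restrict_mem measurableSet_Ioc] with t ht
    exact Real.rpow_nonneg ht.1.le _
  calc ∫⁻ z in B, ENNReal.ofReal |u z - u a|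
      ≤ ∫⁻ z in B, ENNReal.ofReal R *
          ∫⁻ t in Ioc (0:ℝ) 1, ENNReal.ofReal ‖fderiv ℝ u (a + t • (z - a))‖ :=
        setLIntegral_mono' hB fun z hz => ofReal_abs_sub_le_lintegral_segment hu (hR z hz)
    _ = ENNReal.ofReal R * ∫⁻ t in Ioc (0:ℝ) 1,
          ∫⁻ z in B, ENNReal.ofReal ‖fderiv ℝ u (a + t • (z - a))‖ := by
        rw [lintegral_const_mul' _ _ ENNReal.ofReal_ne_top, lintegral_lintegral_swap]
        exact (ENNReal.continuous_ofReal.comp (by fun_prop)).measurable.aemeasurable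
    _ ≤ ENNReal.ofReal R * ∫⁻ t in Ioc (0:ℝ) 1, volume B *
          (ENNReal.ofReal (S * (q / (q - 1))) * ENNReal.ofReal (t ^ (-((n:ℝ) / q)))) := by
        refine mul_le_mul' le_rfl ?_
        exact setLIntegral_mono' measurableSet_Ioc slice
    _ = _ := by
        rw [lintegral_const_mul _ (by fun_prop), lintegral_const_mul _ (by fun_prop), radial,
          ← ENNReal.ofReal_mul (by positivity), mul_left_comm, mul_assoc]

theorem volume_norm_fderiv_gt_le {n : ℕ} (hn : 0 < n) {δ p : ℝ} (hδ : 0 < δ) (hδn : δ ≤ n)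
    (hp : δ < p) (u : EuclideanSpace ℝ (Fin n) → ℝ) {M d : ℝ} (hM : 0 < M) (hd : 0 < d)
    (hA : choquet n δ univ (fun z => ENNReal.ofReal (‖fderiv ℝ u z‖ ^ p)) ≤ ENNReal.ofReal M)
    (x : EuclideanSpace ℝ (Fin n)) {s : ℝ} (hs : 0 < s) :
    volume {z | s < ‖fderiv ℝ u z‖} ≤ volume (ball x d) *
      ENNReal.ofReal ((d ^ (-(δ / p)) * M ^ (1 / p) / s) ^ (p * n / δ)) := by
  have hp0 : 0 < p := hδ.trans hp
  have hsp : 0 < s ^ p := Real.rpow_pos_of_pos hs p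
  have hset : {z | s < ‖fderiv ℝ u z‖} =
      {z | ENNReal.ofReal (s ^ p) < ENNReal.ofReal (‖fderiv ℝ u z‖ ^ p)} := by
    ext z
    simp only [mem_ofPred_eq]
    rw [ENNReal.ofReal_lt_ofReal_iff_of_nonneg hsp.le,
      Real.rpow_lt_rpow_iff hs.le (norm_nonneg _) hp0]
  have hH : hc n δ {z | s < ‖fderiv ℝ u z‖} ≤ ENNReal.ofReal (M / s ^ p) := by
    rw [ENNReal.ofReal_div_of_pos hsp, ENNReal.le_div_iff_mul_le (by simp [hsp]) (by simp),
      mul_comm, hset]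
    exact (ofReal_mul_hc_le_choquet _ _).trans hA
  calc _ ≤ _ := volume_le_hc_rpow hn hδ hδn _
    _ ≤ volume (ball (0 : EuclideanSpace ℝ (Fin n)) 1) * ENNReal.ofReal (M / s ^ p) ^ (n / δ) := by
        gcongr
    _ = _ := by
        rw [Measure.addHaar_ball_of_pos _ _ hd, finrank_euclideanSpace_fin, mul_right_comm, mul_comm,
          ← ENNReal.ofReal_mul (by positivity),
          ENNReal.ofReal_rpow_of_nonneg (by positivity) (by positivity)]
        congr 2
        rw [Real.div_rpow (by positivity) hs.le, Real.div_rpow hM.le hsp.le,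
          Real.mul_rpow (by positivity) (by positivity), ← Real.rpow_mul hd.le,
          ← Real.rpow_mul hM.le, ← Real.rpow_mul hs.le,
          show -(δ / p) * (p * n / δ) = -n by field_simp,
          show 1 / p * (p * n / δ) = n / δ by field_simp, Real.rpow_neg hd.le, Real.rpow_natCast,
          ← mul_div_assoc p]
        field_simp

theorem abs_sub_le_of_choquet_le {n : ℕ} (hn : 1 ≤ n) {δ p : ℝ} (hδ : 0 < δ) (hδn : δ ≤ n)
    (hp : δ < p) {u : EuclideanSpace ℝ (Fin n) → ℝ} (hu : ContDiff ℝ 1 u) {M : ℝ} (hM : 0 < M)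
    (hA : choquet n δ univ (fun z => ENNReal.ofReal (‖fderiv ℝ u z‖ ^ p)) ≤ ENNReal.ofReal M)
    {x y : EuclideanSpace ℝ (Fin n)} (hxy : x ≠ y) :
    |u x - u y| ≤ 3 * (p * n / δ / (p * n / δ - 1) * (1 - n / (p * n / δ))⁻¹) *
      dist x y ^ (1 - δ / p) * M ^ (1 / p) := by
  have hd : 0 < dist x y := dist_pos.2 hxy
  have hp0 : 0 < p := hδ.trans hp
  have hn' : (1:ℝ) ≤ n := by exact_mod_cast hn
  have hq : (n:ℝ) < p * n / δ := by
    rw [lt_div_iff₀ hδ]; nlinarith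
  have hq1 : 0 < p * n / δ - 1 := by linarith
  have hnq : 0 < 1 - n / (p * n / δ) := by
    rw [sub_pos, div_lt_one (by linarith)]; exact hq
  set q := p * n / δ with hqdef
  set d := dist x y with hddef
  set S := d ^ (-(δ / p)) * M ^ (1 / p) with hSdef
  have hS : 0 < S := by positivity
  set κ := q / (q - 1) * (1 - n / q)⁻¹ with hκdef
  have hκ : 0 < κ := by
    have : 0 < q := by linarith
    positivity
  have hw := fun s (hs : 0 < s) => volume_norm_fderiv_gt_le hn hδ hδn hp u hM hd hA x hs
  have hx := setLIntegral_abs_sub_le_of_weak_bound hn hu hq hS measurableSet_ball x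
    (R := d) (fun z hz => (mem_ball.1 hz).le) hw
  have hy := setLIntegral_abs_sub_le_of_weak_bound hn hu hq hS measurableSet_ball y
    (R := 2 * d) (fun z hz => by
      have := mem_ball.1 hz
      linarith [dist_triangle z x y]) hw
  have huc := hu.continuous
  have key : volume (ball x d) * ENNReal.ofReal |u x - u y| ≤
      volume (ball x d) * ENNReal.ofReal (3 * d * (S * κ)) := by
    calc volume (ball x d) * ENNReal.ofReal |u x - u y|
        = ∫⁻ z in ball x d, ENNReal.ofReal |u x - u y| := by rw [setLIntegral_const, mul_comm]
      _ ≤ ∫⁻ z in ball x d, (ENNReal.ofReal |u z - u x| + ENNReal.ofReal |u z - u y|) := by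
          refine lintegral_mono fun z => ?_
          simp only
          rw [← ENNReal.ofReal_add (abs_nonneg _) (abs_nonneg _), abs_sub_comm (u z) (u x)]
          exact ENNReal.ofReal_le_ofReal (abs_sub_le _ _ _)
      _ ≤ _ := by
          rw [lintegral_add_left (by fun_prop)]
          refine (add_le_add hx hy).trans_eq ?_
          rw [← mul_add, ← add_mul, ← ENNReal.ofReal_add hd.le (by positivity),
            ← ENNReal.ofReal_mul (by positivity), ← hκdef]
          ring_nf
  rw [ENNReal.mul_le_mul_iff_right (measure_ball_pos _ _ hd).ne' measure_ball_lt_top.ne,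
    ENNReal.ofReal_le_ofReal_iff (by positivity)] at key
  refine key.trans_eq ?_
  rw [hSdef, sub_eq_add_neg, Real.rpow_add hd, Real.rpow_one]
  ring

theorem stmt_8 (n : ℕ) (hn : 2 ≤ n) (δ p : ℝ) (hδ : 0 < δ) (hδn : δ ≤ n) (hp : δ < p) :
    ∃ c : ℝ≥0∞, c ≠ ⊤ ∧
      ∀ u : EuclideanSpace ℝ (Fin n) → ℝ, ContDiff ℝ 1 u →
        ∀ x y : EuclideanSpace ℝ (Fin n), x ≠ y →
          ENNReal.ofReal (|u x - u y|) ≤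
            c * ENNReal.ofReal (dist x y ^ (1 - δ / p)) *
              (choquet n δ Set.univ (fun z => ENNReal.ofReal (‖fderiv ℝ u z‖ ^ p))) ^ (1 / p) := by
  have hp0 : 0 < p := hδ.trans hp
  have hn' : (2:ℝ) ≤ n := by exact_mod_cast hn
  set C := 3 * (p * n / δ / (p * n / δ - 1) * (1 - n / (p * n / δ))⁻¹) with hC
  have hCpos : 0 < C := by
    have hq : (n:ℝ) < p * n / δ := by rw [lt_div_iff₀ hδ]; nlinarith
    have hq1 : 0 < p * n / δ - 1 := by linarith
    have hnq : 0 < 1 - n / (p * n / δ) := by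
      rw [sub_pos, div_lt_one (by linarith)]; exact hq
    positivity
  refine ⟨ENNReal.ofReal C, ENNReal.ofReal_ne_top, fun u hu x y hxy => ?_⟩
  have hd : 0 < dist x y := dist_pos.2 hxy
  have hD : 0 < dist x y ^ (1 - δ / p) := Real.rpow_pos_of_pos hd _
  set A := choquet n δ Set.univ (fun z => ENNReal.ofReal (‖fderiv ℝ u z‖ ^ p)) with hA
  rw [← ENNReal.ofReal_mul hCpos.le]
  by_cases hAt : A = ⊤
  · rw [hAt, ENNReal.top_rpow_of_pos (by positivity), ENNReal.mul_top]
    · exact le_top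
    · simpa using mul_pos hCpos hD
  have hlim : Filter.Tendsto (fun M : ℝ => C * dist x y ^ (1 - δ / p) * M ^ (1 / p))
      (nhdsWithin A.toReal (Ioi A.toReal))
      (nhds (C * dist x y ^ (1 - δ / p) * A.toReal ^ (1 / p))) :=
    ((Real.continuousAt_rpow_const _ _ (Or.inr (by positivity))).const_mul _).tendsto.mono_left
      nhdsWithin_le_nhds
  have hle : |u x - u y| ≤ C * dist x y ^ (1 - δ / p) * A.toReal ^ (1 / p) := by
    refine ge_of_tendsto hlim ?_
    filter_upwards [self_mem_nhdsWithin] with M hM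
    exact abs_sub_le_of_choquet_le (by omega) hδ hδn hp hu (ENNReal.toReal_nonneg.trans_lt hM)
      ((ENNReal.le_ofReal_iff_toReal_le hAt (ENNReal.toReal_nonneg.trans hM.le)).2 hM.le) hxy
  refine (ENNReal.ofReal_le_ofReal hle).trans_eq ?_
  rw [ENNReal.ofReal_mul (by positivity), ← ENNReal.ofReal_rpow_of_nonneg ENNReal.toReal_nonneg
    (by positivity), ENNReal.ofReal_toReal hAt]
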